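/- Anti-symmetry of inverses at high order: if α is a loop at x of order at least r (all iterated integrals of length ≤ r-1 vanish on α), then for every word u of 1-forms of length at most 2r-1, ∫_{α^{-1}} u = -∫_α u. -/

import Mathlib

open Finset

attribute [local instance] Classical.propDecidable

/-- A digraph: vertex type `V`, arrow relation without self-loops. -/
structure Digraph' (V : Type*) where
  Arrow : V → V → Prop
  irrefl : ∀ v, ¬ Arrow v v

/-- A step of a path map: an arrow `a → b` traversed forward, an arrow `a → b`
traversed backward (from `b` to `a`), or a trivial arrow at a vertex. -/
inductive PStep (V : Type*) where
  | fwd : V → V → PStep V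
  | bwd : V → V → PStep V
  | triv : V → PStep V

namespace PStep
variable {V : Type*}

def src : PStep V → V
  | fwd a _ => a
  | bwd _ b => b
  | triv a => a

def tgt : PStep V → V
  | fwd _ b => b
  | bwd a _ => a
  | triv a => a

/-- The step uses an actual arrow of `G` (or is trivial). -/
def ok (G : Digraph' V) : PStep V → Prop
  | fwd a b => G.Arrow a b
  | bwd a b => G.Arrow a b
  | triv _ => True

/-- The inverse step. -/
def inv : PStep V → PStep V
  | fwd a b => bwd a b
  | bwd a b => fwd a b
  | triv a => triv a

/-- Pairing `⟨ω, s⟩` of a 1-form with a step: `ω(a)` forward, `-ω(a)` backward,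
`0` on trivial arrows. -/
def pair {K : Type*} [Field K] (ω : V → V → K) : PStep V → K
  | fwd a b => ω a b
  | bwd a b => - ω a b
  | triv _ => 0

end PStep

/-- `σ 1, …, σ n` are the steps of a path map `I_n → G`. -/
def IsPathMap {V : Type*} (G : Digraph' V) (n : ℕ) (σ : ℕ → PStep V) : Prop :=
  (∀ t, 1 ≤ t → t ≤ n → (σ t).ok G) ∧
  (∀ t, 1 ≤ t → t < n → (σ t).tgt = (σ (t + 1)).src)

/-- Volume number of a finite sequence: product of factorials of multiplicities. -/
def volFin {r : ℕ} (g : Fin r → ℕ) : ℕ :=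
  ∏ k ∈ Finset.image g Finset.univ,
    Nat.factorial ((Finset.univ.filter (fun j => g j = k)).card)

/-- The iterated integral `∫_α ω_1 ⋯ ω_r` along a path map of length `n`
with steps `σ 1, …, σ n`. -/
noncomputable def iint (K : Type*) [Field K] {V : Type*} (n : ℕ) (σ : ℕ → PStep V)
    (r : ℕ) (ω : Fin r → V → V → K) : K :=
  ∑ f ∈ Finset.univ.filter (fun f : Fin r → Fin n => Monotone f),
    (∏ i, PStep.pair (ω i) (σ ((f i : ℕ) + 1))) / (volFin (fun i => (f i : ℕ)) : K)

/-- Concatenation of step sequences: the first `n` steps from `σ`, then steps of `τ`. -/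
def concatP {V : Type*} (n : ℕ) (σ τ : ℕ → PStep V) : ℕ → PStep V :=
  fun t => if t ≤ n then σ t else τ (t - n)

/-- The inverse path map of a path map of length `n`. -/
def invP {V : Type*} (n : ℕ) (σ : ℕ → PStep V) : ℕ → PStep V :=
  fun t => (σ (n + 1 - t)).inv

/-- Multiplicity of the value `k` in the (1-indexed) sequence `t 1, …, t r`. -/
def multN (t : ℕ → ℕ) (r k : ℕ) : ℕ := ((Finset.Icc 1 r).filter (fun j => t j = k)).card

/-- Volume number of the sequence `t 1, …, t r`: the product over all `k` of
the factorial of the multiplicity of `k`. -/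
noncomputable def volN (t : ℕ → ℕ) (r : ℕ) : ℕ := ∏ᶠ k, Nat.factorial (multN t r k)

/-- A path map is at least of order `r` if all iterated integrals of length `≤ r-1`
vanish on it. -/
def atLeastOrder (K : Type*) [Field K] {V : Type*} (n : ℕ) (σ : ℕ → PStep V) (r : ℕ) : Prop :=
  ∀ l : ℕ, 1 ≤ l → l ≤ r - 1 → ∀ ω : Fin l → V → V → K, iint K n σ l ω = 0

namespace IintAux

lemma volFin_eq {r : ℕ} (g : Fin r → ℕ) (N : ℕ) (h : ∀ i, g i < N) :
    volFin g = ∏ k ∈ Finset.range N, Nat.factorial (∑ j, if g j = k then 1 else 0) := by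
  unfold volFin
  simp only [Finset.card_filter]
  apply Finset.prod_subset
  · intro k hk
    simp only [Finset.mem_image, Finset.mem_univ, true_and] at hk
    obtain ⟨i, rfl⟩ := hk
    exact Finset.mem_range.2 (h i)
  · intro k _ hk
    have : ∀ j, ¬ g j = k := by
      intro j hj
      exact hk (Finset.mem_image.2 ⟨j, Finset.mem_univ _, hj⟩)
    simp [this]

/-- Extend a map into `Fin n` by the constant last value. -/
def ext {k n : ℕ} (d : ℕ) (g : Fin k → Fin n) : Fin (k + d) → Fin (n + 1) :=
  Fin.append (fun i => (g i).castSucc) (fun _ => Fin.last n)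

lemma ext_mono {k n d : ℕ} {g : Fin k → Fin n} (hg : Monotone g) : Monotone (ext d g) := by
  intro a b hab
  unfold ext
  induction b using Fin.addCases with
  | right b => simp only [Fin.append_right]; exact Fin.le_last _
  | left b =>
    induction a using Fin.addCases with
    | left a =>
      simp only [Fin.append_left]
      have : a ≤ b := hab
      exact Fin.castSucc_le_castSucc_iff.2 (hg this)
    | right a =>
      exfalso
      have := b.2
      have hab' : k + (a : ℕ) ≤ b := hab
      omega

lemma vol_ext {k n d : ℕ} (g : Fin k → Fin n) :
    volFin (fun i => (ext d g i : ℕ)) = volFin (fun i => (g i : ℕ)) * Nat.factorial d := by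
  rw [volFin_eq _ (n + 1) (fun i => (ext d g i).2), volFin_eq _ n (fun i => (g i).2),
    Finset.prod_range_succ]
  unfold ext
  simp only [Fin.sum_univ_add, Fin.append_left, Fin.append_right, Fin.val_castSucc, Fin.val_last]
  congr 1
  · apply Finset.prod_congr rfl
    intro x hx
    have hx' := Finset.mem_range.1 hx
    have : ¬ n = x := by omega
    simp [this]
  · have : ∀ i, ¬ ((g i : ℕ) = n) := fun i => by have := (g i).2; omega
    simp [this]

/-- number of indices not mapped to the last value -/
def cnt {m n : ℕ} (f : Fin m → Fin (n + 1)) : ℕ :=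
  (Finset.univ.filter (fun i => f i ≠ Fin.last n)).card

lemma cnt_le {m n : ℕ} (f : Fin m → Fin (n + 1)) : cnt f ≤ m := by
  unfold cnt
  exact (Finset.card_le_univ _).trans (by simp)

lemma cnt_iff {m n : ℕ} {f : Fin m → Fin (n + 1)} (hf : Monotone f) (i : Fin m) :
    f i ≠ Fin.last n ↔ (i : ℕ) < cnt f := by
  constructor
  · intro h
    have : Finset.Iic i ⊆ Finset.univ.filter (fun i => f i ≠ Fin.last n) := by
      intro j hj
      simp only [Finset.mem_filter, Finset.mem_univ, true_and]
      intro hj'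
      apply h
      apply le_antisymm (Fin.le_last _)
      rw [← hj']
      exact hf (Finset.mem_Iic.1 hj)
    have := Finset.card_le_card this
    rw [Fin.card_Iic] at this
    unfold cnt
    omega
  · intro h h'
    have : Finset.univ.filter (fun i => f i ≠ Fin.last n) ⊆ Finset.Iio i := by
      intro j hj
      simp only [Finset.mem_filter, Finset.mem_univ, true_and] at hj
      rw [Finset.mem_Iio]
      by_contra hij
      apply hj
      apply le_antisymm (Fin.le_last _)
      rw [← h']
      exact hf (not_lt.1 hij)
    have := Finset.card_le_card this
    rw [Fin.card_Iio] at this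
    unfold cnt at h
    omega

lemma cnt_ext {k n d : ℕ} (g : Fin k → Fin n) : cnt (ext d g) = k := by
  unfold cnt ext
  rw [Finset.card_filter, Fin.sum_univ_add]
  simp

lemma sum_ext {K : Type*} [Field K] {k n d : ℕ} (F : (Fin (k + d) → Fin (n + 1)) → K) :
    ∑ f ∈ (Finset.univ.filter (fun f : Fin (k + d) → Fin (n + 1) => Monotone f)).filter
        (fun f => cnt f = k), F f =
      ∑ g ∈ Finset.univ.filter (fun g : Fin k → Fin n => Monotone g), F (ext d g) := by
  symm
  apply Finset.sum_bij (fun g _ => ext d g)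
  · intro g hg
    simp only [Finset.mem_filter, Finset.mem_univ, true_and] at hg ⊢
    exact ⟨ext_mono hg, cnt_ext g⟩
  · intro g _ g' _ h
    funext i
    have := congrFun h (Fin.castAdd d i)
    simpa [ext] using this
  · intro f hf
    simp only [Finset.mem_filter, Finset.mem_univ, true_and] at hf
    obtain ⟨hm, hc⟩ := hf
    have h1 : ∀ i : Fin k, f (Fin.castAdd d i) ≠ Fin.last n := by
      intro i
      rw [cnt_iff hm, hc]
      exact i.2
    have h2 : ∀ i : Fin d, f (Fin.natAdd k i) = Fin.last n := by
      intro i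
      by_contra h
      have := (cnt_iff hm _).1 h
      rw [hc] at this
      simp at this
    refine ⟨fun i => (f (Fin.castAdd d i)).castPred (h1 i), ?_, ?_⟩
    · simp only [Finset.mem_filter, Finset.mem_univ, true_and]
      intro a b hab
      rw [Fin.castPred_le_castPred_iff]
      exact hm hab
    · funext i
      induction i using Fin.addCases with
      | left i => simp [ext]
      | right i => simp [ext, h2]
  · intros; rfl

variable {V K : Type*} [Field K]

/-- The incidence-algebra element of one step. -/
noncomputable def M (ω : ℕ → V → V → K) (s : PStep V) : IncidenceAlgebra K ℕ where
  toFun a b := if a ≤ b then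
    (∏ j ∈ Finset.range (b - a), PStep.pair (ω (a + j)) s) / (Nat.factorial (b - a) : K) else 0
  eq_zero_of_not_le' := by
    intro a b h
    simp [h]

lemma M_apply (ω : ℕ → V → V → K) (s : PStep V) (a d : ℕ) :
    M ω s a (a + d) = (∏ j ∈ Finset.range d, PStep.pair (ω (a + j)) s) / (Nat.factorial d : K) := by
  change (if a ≤ a + d then _ else _) = _
  simp

lemma mul_apply_add (A B : IncidenceAlgebra K ℕ) (a d : ℕ) :
    (A * B) a (a + d) = ∑ k ∈ Finset.range (d + 1), A a (a + k) * B (a + k) (a + d) := by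
  rw [IncidenceAlgebra.mul_apply]
  symm
  apply Finset.sum_bij (fun k _ => a + k)
  · intro k hk
    have := Finset.mem_range.1 hk
    rw [Finset.mem_Icc]; omega
  · intro _ _ _ _ h; omega
  · intro b hb
    rw [Finset.mem_Icc] at hb
    exact ⟨b - a, Finset.mem_range.2 (by omega), by omega⟩
  · intros; rfl

lemma pair_inv (w : V → V → K) (s : PStep V) : PStep.pair w s.inv = - PStep.pair w s := by
  cases s <;> simp [PStep.pair, PStep.inv]

lemma M_mul_inv [CharZero K] (ω : ℕ → V → V → K) (s : PStep V) : M ω s * M ω s.inv = 1 := by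
  ext a b hab
  obtain ⟨d, rfl⟩ := Nat.exists_eq_add_of_le hab
  rw [mul_apply_add, IncidenceAlgebra.one_apply]
  have key : ∀ k ∈ Finset.range (d + 1), M ω s a (a + k) * M ω s.inv (a + k) (a + d) =
      ((∏ j ∈ Finset.range d, PStep.pair (ω (a + j)) s) / (Nat.factorial d : K)) *
        (1 ^ k * (-1) ^ (d - k) * (Nat.choose d k : K)) := by
    intro k hk
    obtain ⟨e, rfl⟩ := Nat.exists_eq_add_of_le (Nat.lt_succ_iff.1 (Finset.mem_range.1 hk))
    rw [← add_assoc, M_apply, M_apply, Finset.prod_range_add]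
    simp only [pair_inv, Finset.prod_neg, Finset.card_range, add_assoc, Nat.add_sub_cancel_left]
    have h : ((Nat.choose (k + e) k : ℕ) : K) * (Nat.factorial k) * (Nat.factorial e) =
        Nat.factorial (k + e) := by
      have := Nat.add_choose_mul_factorial_mul_factorial k e
      rw [← Nat.choose_symm_add] at this
      exact_mod_cast this
    have h1 : (Nat.factorial k : K) ≠ 0 := by exact_mod_cast Nat.factorial_ne_zero k
    have h2 : (Nat.factorial e : K) ≠ 0 := by exact_mod_cast Nat.factorial_ne_zero e
    have h3 : (Nat.factorial (k + e) : K) ≠ 0 := by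
      exact_mod_cast Nat.factorial_ne_zero (k + e)
    field_simp
    rw [← h]
    ring
  rw [Finset.sum_congr rfl key, ← Finset.mul_sum, ← add_pow]
  rcases Nat.eq_zero_or_pos d with rfl | hd
  · simp
  · have : ¬ a = a + d := by omega
    simp [this, hd.ne']

/-- Product along a path. -/
noncomputable def P (ω : ℕ → V → V → K) (n : ℕ) (σ : ℕ → PStep V) : IncidenceAlgebra K ℕ :=
  ((List.range n).map (fun t => M ω (σ (t + 1)))).prod

lemma P_succ (ω : ℕ → V → V → K) (n : ℕ) (σ : ℕ → PStep V) :
    P ω (n + 1) σ = P ω n σ * M ω (σ (n + 1)) := by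
  simp [P, List.range_succ]

lemma P_succ' (ω : ℕ → V → V → K) (n : ℕ) (σ : ℕ → PStep V) :
    P ω (n + 1) σ = M ω (σ 1) * P ω n (fun t => σ (t + 1)) := by
  simp [P, List.range_succ_eq_map, Function.comp_def]

lemma P_mul_inv [CharZero K] (ω : ℕ → V → V → K) (n : ℕ) (σ : ℕ → PStep V) :
    P ω n σ * P ω n (invP n σ) = 1 := by
  induction n with
  | zero => simp [P]
  | succ n ih =>
    have h : (fun t => invP (n + 1) σ (t + 1)) = invP n σ := by
      funext t
      simp [invP]
    have h1 : invP (n + 1) σ 1 = (σ (n + 1)).inv := by simp [invP]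
    rw [P_succ, P_succ', h, h1, mul_assoc, ← mul_assoc (M ω (σ (n + 1))), M_mul_inv, one_mul, ih]

lemma iint_succ (n : ℕ) (σ : ℕ → PStep V) (m : ℕ) (w : ℕ → V → V → K) :
    iint K (n + 1) σ m (fun i => w i) = ∑ k ∈ Finset.range (m + 1),
      iint K n σ k (fun i => w i) *
        ((∏ j ∈ Finset.range (m - k), PStep.pair (w (k + j)) (σ (n + 1))) /
          (Nat.factorial (m - k) : K)) := by
  conv_lhs => unfold iint
  rw [← Finset.sum_fiberwise_of_maps_to (g := cnt) (t := Finset.range (m + 1))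
    (fun f _ => Finset.mem_range.2 (Nat.lt_succ_of_le (cnt_le f)))]
  apply Finset.sum_congr rfl
  intro k hk
  obtain ⟨d, rfl⟩ := Nat.exists_eq_add_of_le (Nat.lt_succ_iff.1 (Finset.mem_range.1 hk))
  rw [sum_ext, Nat.add_sub_cancel_left]
  unfold iint
  rw [Finset.sum_mul]
  apply Finset.sum_congr rfl
  intro g _
  rw [vol_ext, Fin.prod_univ_add, Finset.prod_range]
  simp only [ext, Fin.append_left, Fin.append_right, Fin.val_castSucc, Fin.val_last,
    Fin.val_castAdd, Fin.val_natAdd]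
  push_cast
  rw [div_mul_div_comm]

lemma iint_zero_word (n : ℕ) (σ : ℕ → PStep V) (w : Fin 0 → V → V → K) :
    iint K n σ 0 w = 1 := by
  have : Finset.univ.filter (fun f : Fin 0 → Fin n => Monotone f) = Finset.univ := by
    apply Finset.filter_true_of_mem
    intro f _ a
    exact a.elim0
  unfold iint
  rw [this]
  simp [volFin]

lemma iint_eq_P (ω : ℕ → V → V → K) (n : ℕ) (σ : ℕ → PStep V) (a m : ℕ) :
    iint K n σ m (fun i => ω (a + i)) = P ω n σ a (a + m) := by
  induction n generalizing m with
  | zero =>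
    rcases Nat.eq_zero_or_pos m with rfl | hm
    · rw [iint_zero_word]; simp [P]
    · have : Nonempty (Fin m) := ⟨⟨0, hm⟩⟩
      have h : ¬ a = a + m := by omega
      simp [P, iint, IncidenceAlgebra.one_apply, h, hm.ne']
  | succ n ih =>
    rw [P_succ, mul_apply_add, iint_succ n σ m (fun i => ω (a + i))]
    apply Finset.sum_congr rfl
    intro k hk
    obtain ⟨d, rfl⟩ := Nat.exists_eq_add_of_le (Nat.lt_succ_iff.1 (Finset.mem_range.1 hk))
    rw [ih, ← add_assoc, M_apply, Nat.add_sub_cancel_left]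
    simp only [add_assoc]

lemma conv [CharZero K] (ω : ℕ → V → V → K) (n : ℕ) (σ : ℕ → PStep V) (l : ℕ) (hl : 1 ≤ l) :
    ∑ k ∈ Finset.range (l + 1), iint K n σ k (fun i => ω i) *
      iint K n (invP n σ) (l - k) (fun i => ω (k + i)) = 0 := by
  have h := congrArg (fun A : IncidenceAlgebra K ℕ => A 0 (0 + l)) (P_mul_inv ω n σ)
  simp only [mul_apply_add, IncidenceAlgebra.one_apply] at h
  have h0 : ¬ 0 = 0 + l := by omega
  rw [if_neg h0] at h
  rw [← h]
  apply Finset.sum_congr rfl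
  intro k hk
  obtain ⟨d, rfl⟩ := Nat.exists_eq_add_of_le (Nat.lt_succ_iff.1 (Finset.mem_range.1 hk))
  rw [← iint_eq_P, Nat.add_sub_cancel_left, iint_eq_P ω n (invP n σ)]
  simp only [zero_add]

lemma conv' [CharZero K] (ω : ℕ → V → V → K) (n : ℕ) (σ : ℕ → PStep V) (l : ℕ) (hl : 1 ≤ l)
    (hz : ∀ k, 1 ≤ k → k < l → iint K n σ k (fun i => ω i) *
      iint K n (invP n σ) (l - k) (fun i => ω (k + i)) = 0) :
    iint K n (invP n σ) l (fun i => ω i) = - iint K n σ l (fun i => ω i) := by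
  have h := conv ω n σ l hl
  obtain ⟨m, rfl⟩ : ∃ m, l = m + 1 := ⟨l - 1, by omega⟩
  rw [Finset.sum_range_succ, Finset.sum_range_succ', Finset.sum_eq_zero] at h
  · simp only [zero_add, Nat.sub_zero, iint_zero_word, one_mul] at h
    have e : iint K n (invP n σ) (m + 1 - (m + 1)) (fun i => ω (m + 1 + i)) = 1 := by
      generalize hq : m + 1 - (m + 1) = q
      have : q = 0 := by omega
      subst this
      exact iint_zero_word _ _ _
    rw [e, mul_one] at h
    exact eq_neg_of_add_eq_zero_left h
  · intro k hk
    have := Finset.mem_range.1 hk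
    exact hz (k + 1) (by omega) (by omega)

lemma exists_ext {l : ℕ} (ω : Fin l → V → V → K) :
    ∃ w : ℕ → V → V → K, ω = fun i : Fin l => w i :=
  ⟨fun i => if h : i < l then ω ⟨i, h⟩ else 0, by funext i; simp⟩

end IintAux

/-- Anti-symmetry of inverses at high order: if `α` is a loop at `x` of order `≥ r`,
then `∫_{α⁻¹} u = -∫_α u` for every word `u` of length `≤ 2r-1`. -/
theorem stmt17 {V : Type*} (K : Type*) [Field K] [CharZero K] (G : Digraph' V)
    (n r : ℕ) (σ : ℕ → PStep V) (hσ : IsPathMap G n σ)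
    (hloop : (σ 1).src = (σ n).tgt) (hα : atLeastOrder K n σ r) :
    ∀ l : ℕ, 1 ≤ l → l ≤ 2 * r - 1 → ∀ ω : Fin l → V → V → K,
      iint K n (invP n σ) l ω = - iint K n σ l ω := by
  have hinv : atLeastOrder K n (invP n σ) r := by
    intro l hl hlr ω
    obtain ⟨w, rfl⟩ := IintAux.exists_ext ω
    rw [IintAux.conv' w n σ l hl, hα l hl hlr, neg_zero]
    intro k hk hkl
    rw [hα k hk (by omega), zero_mul]
  intro l hl hlr ω
  obtain ⟨w, rfl⟩ := IintAux.exists_ext ω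
  apply IintAux.conv' w n σ l hl
  intro k hk hkl
  by_cases hkr : k ≤ r - 1
  · rw [hα k hk hkr, zero_mul]
  · rw [hinv (l - k) (by omega) (by omega), mul_zero]
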